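/- Let d ≥ 1 and let η be the Minkowski form on ℝ^{1+d} (η = diag(−1, 1, …, 1), coordinates (t, x¹, …, x^d)), so that □_η φ = −∂_t² φ + Δ_x φ. Let F : ℝ → ℝ be smooth, let φ : ℝ^{1+d} → ℝ be a smooth solution of □_η φ = F(φ), and let K(x) = A x + b be an affine η-Killing field (A η-antisymmetric). If the Lie derivative ψ := Kφ and its time derivative ∂_t ψ both vanish identically on the initial hypersurface {t = 0}, then ψ ≡ 0 on all of ℝ^{1+d}; that is, φ is invariant along K. (This is the paper's Theorem 3.1 — symmetries of initial data are preserved by hyperbolic evolution — instantiated for a scalar field on fixed flat Minkowski spacetime in the standard Cauchy problem.) -/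

import Mathlib

/-- Partial derivative of a scalar field on ℝ^{1+d} in the `a`-th coordinate direction
(index `0` is the time coordinate `t`). -/
noncomputable def pd {d : ℕ} (a : Fin (d + 1)) (u : (Fin (d + 1) → ℝ) → ℝ) :
    (Fin (d + 1) → ℝ) → ℝ :=
  fun x => fderiv ℝ u x (Pi.single a 1)

/-- The Minkowski d'Alembertian `□_η φ = −∂_t² φ + Δ_x φ` on ℝ^{1+d},
with `η = diag(−1, 1, …, 1)` and time coordinate indexed by `0`. -/
noncomputable def boxMink {d : ℕ} (u : (Fin (d + 1) → ℝ) → ℝ) :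
    (Fin (d + 1) → ℝ) → ℝ :=
  fun x => -(pd 0 (pd 0 u) x) + ∑ i : Fin d, pd i.succ (pd i.succ u) x

/-- The Minkowski bilinear form `η(v,w) = −v⁰w⁰ + Σ_i vⁱwⁱ` on ℝ^{1+d}. -/
noncomputable def minkForm {d : ℕ} (v w : Fin (d + 1) → ℝ) : ℝ :=
  -(v 0 * w 0) + ∑ i : Fin d, v i.succ * w i.succ

/-! Lie derivatives along Killing fields commute with `□`, so `ψ = Kφ` solves the linearized
equation `□ψ = F'(φ) ψ`, with vanishing Cauchy data. Such a solution is zero by an energy estimate.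
Multiply the energy current of `ψ` by a smooth weight `exp(-l t) χ` with `χ` supported in the light
cone of a point `p`, and integrate the divergence over a box enclosing the part of the past cone in
`{t ≥ 0}`. The fluxes vanish: through the bottom by the initial data, and through the other faces
because they do not meet the interior of the cone. By the dominant energy condition the divergence
is at least the weighted energy density once `l` is large, so the energy density vanishes in the
past cone. Negative times follow by time reflection. -/

section PartialDerivatives

variable {d : ℕ} {u v : (Fin (d + 1) → ℝ) → ℝ} {x : Fin (d + 1) → ℝ}

theorem contDiff_pd {m n : WithTop ℕ∞} (hu : ContDiff ℝ n u) (hmn : m + 1 ≤ n)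
    (a : Fin (d + 1)) : ContDiff ℝ m (pd a u) :=
  (hu.fderiv_right hmn).clm_apply contDiff_const

theorem differentiable_pd (hu : ContDiff ℝ 2 u) (a : Fin (d + 1)) : Differentiable ℝ (pd a u) :=
  (contDiff_pd (m := 1) hu le_rfl a).differentiable one_ne_zero

theorem pd_const (a : Fin (d + 1)) (c : ℝ) (x : Fin (d + 1) → ℝ) : pd a (fun _ => c) x = 0 := by
  simp [pd]

theorem pd_coord (a b : Fin (d + 1)) (x : Fin (d + 1) → ℝ) :
    pd a (fun y => y b) x = (Pi.single a 1 : Fin (d + 1) → ℝ) b := by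
  rw [pd, (hasFDerivAt_apply (𝕜 := ℝ) b x).fderiv]
  rfl

theorem pd_neg (a : Fin (d + 1)) : pd a (fun y => -u y) x = -pd a u x := by
  simp [pd, fderiv_fun_neg]

theorem pd_add (a : Fin (d + 1)) (hu : DifferentiableAt ℝ u x) (hv : DifferentiableAt ℝ v x) :
    pd a (fun y => u y + v y) x = pd a u x + pd a v x := by
  simp [pd, fderiv_fun_add hu hv]

theorem pd_sum {ι : Type*} (s : Finset ι) {w : ι → (Fin (d + 1) → ℝ) → ℝ} (a : Fin (d + 1))
    (hw : ∀ i ∈ s, DifferentiableAt ℝ (w i) x) :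
    pd a (fun y => ∑ i ∈ s, w i y) x = ∑ i ∈ s, pd a (w i) x := by
  simp [pd, fderiv_fun_sum hw]

theorem pd_mul (a : Fin (d + 1)) (hu : DifferentiableAt ℝ u x) (hv : DifferentiableAt ℝ v x) :
    pd a (fun y => u y * v y) x = pd a u x * v x + u x * pd a v x := by
  simp only [pd, fderiv_fun_mul hu hv, add_apply, smul_apply, smul_eq_mul]
  ring

theorem pd_const_mul (a : Fin (d + 1)) (c : ℝ) (hu : DifferentiableAt ℝ u x) :
    pd a (fun y => c * u y) x = c * pd a u x := by
  simp [pd, fderiv_const_mul hu]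

theorem pd_comp (a : Fin (d + 1)) {G : ℝ → ℝ} (hG : DifferentiableAt ℝ G (u x))
    (hu : DifferentiableAt ℝ u x) : pd a (fun y => G (u y)) x = deriv G (u x) * pd a u x := by
  have hGu : fderiv ℝ (fun y => G (u y)) x = deriv G (u x) • fderiv ℝ u x :=
    (hG.hasDerivAt.comp_hasFDerivAt x hu.hasFDerivAt).fderiv
  simp [pd, hGu]

theorem pd_sq (a : Fin (d + 1)) (hu : DifferentiableAt ℝ u x) :
    pd a (fun y => u y ^ 2) x = 2 * (u x * pd a u x) := by
  simp only [sq, pd_mul a hu hu]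
  ring

theorem pd_comp_mul_left (a : Fin (d + 1)) (c : Fin (d + 1) → ℝ)
    (hu : DifferentiableAt ℝ u (c * x)) :
    pd a (fun y => u (c * y)) x = c a * pd a u (c * x) := by
  have hcu : fderiv ℝ (fun y => u (c * y)) x =
      (fderiv ℝ u (c * x)).comp (ContinuousLinearMap.mul ℝ (Fin (d + 1) → ℝ) c) :=
    (hu.hasFDerivAt.comp x
      (ContinuousLinearMap.mul ℝ (Fin (d + 1) → ℝ) c).hasFDerivAt).fderiv
  have hc : c * Pi.single a 1 = c a • (Pi.single a 1 : Fin (d + 1) → ℝ) := by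
    rw [← Pi.single_mul_right, ← Pi.single_smul, smul_eq_mul]
  simp [pd, hcu, hc]

theorem pd_pd_comm (hu : ContDiffAt ℝ 2 u x) (a b : Fin (d + 1)) :
    pd a (pd b u) x = pd b (pd a u) x := by
  have hdiff : DifferentiableAt ℝ (fderiv ℝ u) x :=
    (hu.fderiv_right (m := 1) le_rfl).differentiableAt one_ne_zero
  have hpd : ∀ b c, pd c (pd b u) x =
      fderiv ℝ (fderiv ℝ u) x (Pi.single c 1) (Pi.single b 1) := by
    intro b c
    change fderiv ℝ (fun y => fderiv ℝ u y (Pi.single b 1)) x _ = _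
    simp [fderiv_clm_apply hdiff (differentiableAt_const _)]
  have hsymm : IsSymmSndFDerivAt ℝ u x := hu.isSymmSndFDerivAt (by simp)
  rw [hpd, hpd, hsymm]

theorem pd_eq_zero_of_forall_coord_eq_zero {a b : Fin (d + 1)} (hab : a ≠ b)
    (hu : DifferentiableAt ℝ u x) (h : ∀ y, y b = 0 → u y = 0) (hx : x b = 0) :
    pd a u x = 0 := by
  have hline : (fun t : ℝ => u (x + t • Pi.single a (1 : ℝ))) = fun _ => 0 :=
    funext fun t => h _ (by simp [hx, hab.symm])
  rw [pd, ← hu.lineDeriv_eq_fderiv, lineDeriv, hline, deriv_const]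

end PartialDerivatives

section MinkowskiMetric

variable {d : ℕ}

/-- The diagonal entries `(-1, 1, …, 1)` of `η`, used to lower indices and, acting by pointwise
multiplication, as the time reflection `(t, x) ↦ (-t, x)`. -/
def minkSign : Fin (d + 1) → ℝ := Fin.cons (-1) fun _ => 1

@[simp] theorem minkSign_zero : (minkSign : Fin (d + 1) → ℝ) 0 = -1 := rfl

@[simp] theorem minkSign_succ (i : Fin d) : minkSign i.succ = 1 := rfl

@[simp] theorem minkSign_mul_self (a : Fin (d + 1)) : minkSign a * minkSign a = 1 := by
  cases a using Fin.cases <;> simp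

theorem minkForm_eq_sum (v w : Fin (d + 1) → ℝ) :
    minkForm v w = ∑ a, minkSign a * (v a * w a) := by
  simp [minkForm, Fin.sum_univ_succ]

theorem minkForm_self (v : Fin (d + 1) → ℝ) :
    minkForm v v = -v 0 ^ 2 + ∑ i : Fin d, v i.succ ^ 2 := by
  simp only [minkForm, sq]

theorem minkForm_self_nonneg_of_abs_le {v : Fin (d + 1) → ℝ} {i : Fin d}
    (h : |v 0| ≤ |v i.succ|) : 0 ≤ minkForm v v := by
  have hi : v i.succ ^ 2 ≤ ∑ j : Fin d, v j.succ ^ 2 :=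
    Finset.single_le_sum (f := fun j : Fin d => v j.succ ^ 2) (fun j _ => sq_nonneg _)
      (Finset.mem_univ i)
  rw [minkForm_self]
  linarith [sq_le_sq.mpr h]

theorem minkForm_self_nonneg_of_time_eq_zero {v : Fin (d + 1) → ℝ} (h : v 0 = 0) :
    0 ≤ minkForm v v := by
  rw [minkForm_self, h]
  positivity

theorem boxMink_eq_sum (u : (Fin (d + 1) → ℝ) → ℝ) (x : Fin (d + 1) → ℝ) :
    boxMink u x = ∑ a, minkSign a * pd a (pd a u) x := by
  simp [boxMink, Fin.sum_univ_succ]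

theorem pd_minkForm_sub_self (p : Fin (d + 1) → ℝ) (a : Fin (d + 1)) (x : Fin (d + 1) → ℝ) :
    pd a (fun y => minkForm (y - p) (y - p)) x = 2 * (minkSign a * (x - p) a) := by
  have hcoord : ∀ b, pd a (fun y => y b - p b) x = (Pi.single a 1 : Fin (d + 1) → ℝ) b := by
    intro b
    rw [← pd_coord a b x, pd, fderiv_sub_const, pd]
  simp_rw [minkForm_eq_sum, Pi.sub_apply, ← sq]
  simp (disch := fun_prop) only [pd_sum, pd_const_mul, pd_sq, hcoord, Pi.single_apply, mul_ite,
    mul_one, mul_zero, Finset.sum_ite_eq', Finset.mem_univ, if_true]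
  ring

end MinkowskiMetric

section BoxMink

variable {d : ℕ}

theorem boxMink_sum {ι : Type*} (s : Finset ι) {w : ι → (Fin (d + 1) → ℝ) → ℝ}
    (hw : ∀ i ∈ s, ContDiff ℝ 2 (w i)) (x : Fin (d + 1) → ℝ) :
    boxMink (fun y => ∑ i ∈ s, w i y) x = ∑ i ∈ s, boxMink (w i) x := by
  have hpd : ∀ a, pd a (fun y => ∑ i ∈ s, w i y) = fun y => ∑ i ∈ s, pd a (w i) y := fun a =>
    funext fun y => pd_sum s a fun i hi => ((hw i hi).differentiable two_ne_zero).differentiableAt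
  have hpd_pd : ∀ a, pd a (pd a fun y => ∑ i ∈ s, w i y) x = ∑ i ∈ s, pd a (pd a (w i)) x := by
    intro a
    rw [hpd, pd_sum s a fun i hi => (differentiable_pd (hw i hi) a).differentiableAt]
  simp only [boxMink_eq_sum, hpd_pd, Finset.mul_sum]
  exact Finset.sum_comm

theorem boxMink_mul {u v : (Fin (d + 1) → ℝ) → ℝ} (hu : ContDiff ℝ 2 u) (hv : ContDiff ℝ 2 v)
    (x : Fin (d + 1) → ℝ) :
    boxMink (fun y => u y * v y) x = boxMink u x * v x
      + 2 * ∑ a, minkSign a * (pd a u x * pd a v x) + u x * boxMink v x := by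
  have hu₁ : Differentiable ℝ u := hu.differentiable two_ne_zero
  have hv₁ : Differentiable ℝ v := hv.differentiable two_ne_zero
  have hpd : ∀ a, pd a (fun y => u y * v y) = fun y => pd a u y * v y + u y * pd a v y :=
    fun a => funext fun y => pd_mul a (hu₁ y) (hv₁ y)
  have hpd_pd : ∀ a, pd a (pd a fun y => u y * v y) x =
      pd a (pd a u) x * v x + 2 * (pd a u x * pd a v x) + u x * pd a (pd a v) x := by
    intro a
    have hau := differentiable_pd hu a
    have hav := differentiable_pd hv a
    rw [hpd, pd_add a (by fun_prop) (by fun_prop), pd_mul a (hau x) (hv₁ x),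
      pd_mul a (hu₁ x) (hav x)]
    ring
  simp only [boxMink_eq_sum, hpd_pd, Finset.mul_sum, Finset.sum_mul, ← Finset.sum_add_distrib]
  exact Finset.sum_congr rfl fun a _ => by ring

theorem boxMink_pd {u : (Fin (d + 1) → ℝ) → ℝ} (hu : ContDiff ℝ 3 u) (a : Fin (d + 1))
    (x : Fin (d + 1) → ℝ) : boxMink (pd a u) x = pd a (boxMink u) x := by
  have hu₂ : ContDiff ℝ 2 u := hu.of_le (by norm_num)
  have hpd : ∀ c, ContDiff ℝ 2 (pd c u) := contDiff_pd hu (by norm_num)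
  have hpd_pd : ∀ c, Differentiable ℝ (pd c (pd c u)) := fun c => differentiable_pd (hpd c) c
  have hcomm : ∀ c, pd c (pd a u) = pd a (pd c u) := fun c =>
    funext fun y => pd_pd_comm hu₂.contDiffAt c a
  have hbox : boxMink u = fun y => ∑ c, minkSign c * pd c (pd c u) y := funext (boxMink_eq_sum u)
  rw [boxMink_eq_sum, hbox, pd_sum _ a fun c _ => by fun_prop]
  refine Finset.sum_congr rfl fun c _ => ?_
  rw [pd_const_mul a _ (hpd_pd c x), hcomm, pd_pd_comm (hpd c).contDiffAt]

theorem boxMink_comp_minkSign_mul {u : (Fin (d + 1) → ℝ) → ℝ} (hu : ContDiff ℝ 2 u)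
    (x : Fin (d + 1) → ℝ) :
    boxMink (fun y => u (minkSign * y)) x = boxMink u (minkSign * x) := by
  have hu₁ : Differentiable ℝ u := hu.differentiable two_ne_zero
  have hpd : ∀ a, pd a (fun y => u (minkSign * y)) =
      fun y => minkSign a * pd a u (minkSign * y) :=
    fun a => funext fun y => pd_comp_mul_left a minkSign (hu₁ _)
  simp only [boxMink_eq_sum]
  refine Finset.sum_congr rfl fun a _ => ?_
  have hau := differentiable_pd hu a
  rw [hpd, pd_const_mul a _ (by fun_prop), pd_comp_mul_left a minkSign (hau _),
    ← mul_assoc (minkSign a) (minkSign a), minkSign_mul_self, one_mul]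

end BoxMink

section KillingFields

variable {d : ℕ} {K : (Fin (d + 1) → ℝ) → Fin (d + 1) → ℝ} {φ : (Fin (d + 1) → ℝ) → ℝ}

/-- The flat Killing equation `∂_c K_a + ∂_a K_c = 0`, with the index of `K` lowered by `η`. -/
def IsMinkKilling (K : (Fin (d + 1) → ℝ) → Fin (d + 1) → ℝ) : Prop :=
  ∀ a c x, minkSign a * pd c (fun y => K y a) x + minkSign c * pd a (fun y => K y c) x = 0

/-- The Lie derivative `K^a ∂_a φ` of the scalar field `φ` along `K`. -/
noncomputable def lieDeriv (K : (Fin (d + 1) → ℝ) → Fin (d + 1) → ℝ)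
    (φ : (Fin (d + 1) → ℝ) → ℝ) : (Fin (d + 1) → ℝ) → ℝ :=
  fun x => ∑ a, K x a * pd a φ x

theorem contDiff_affine {n : WithTop ℕ∞} (A : (Fin (d + 1) → ℝ) →ₗ[ℝ] Fin (d + 1) → ℝ)
    (b : Fin (d + 1) → ℝ) : ContDiff ℝ n fun x => A x + b :=
  A.toContinuousLinearMap.contDiff.add contDiff_const

theorem pd_affine (A : (Fin (d + 1) → ℝ) →ₗ[ℝ] Fin (d + 1) → ℝ) (b : Fin (d + 1) → ℝ)
    (a c : Fin (d + 1)) (x : Fin (d + 1) → ℝ) :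
    pd c (fun y => (A y + b) a) x = A (Pi.single c 1) a := by
  have hA : HasFDerivAt (fun y => (A y + b) a)
      ((ContinuousLinearMap.proj a).comp A.toContinuousLinearMap) x :=
    (hasFDerivAt_pi'.mp A.toContinuousLinearMap.hasFDerivAt a).add_const (b a)
  rw [pd, hA.fderiv]
  rfl

theorem isMinkKilling_affine {A : (Fin (d + 1) → ℝ) →ₗ[ℝ] Fin (d + 1) → ℝ}
    (hA : ∀ v w, minkForm (A v) w + minkForm v (A w) = 0) (b : Fin (d + 1) → ℝ) :
    IsMinkKilling fun x => A x + b := by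
  intro a c x
  have hac := hA (Pi.single c 1) (Pi.single a 1)
  simp only [minkForm_eq_sum, Pi.single_apply, mul_ite, ite_mul, mul_one, one_mul, mul_zero,
    zero_mul, Finset.sum_ite_eq', Finset.mem_univ, if_true] at hac
  rw [pd_affine, pd_affine, hac]

-- `∂_e ∂_c K_a` is antisymmetric in `a, c` and symmetric in `c, e`, hence zero.
theorem IsMinkKilling.pd_pd_eq_zero (hK : IsMinkKilling K) (hK₂ : ContDiff ℝ 2 K)
    (a c e : Fin (d + 1)) (x : Fin (d + 1) → ℝ) : pd e (pd c fun y => K y a) x = 0 := by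
  have hKa : ∀ a, ContDiff ℝ 2 fun y => K y a := contDiff_pi.mp hK₂
  have hpd : ∀ a c, Differentiable ℝ (pd c fun y => K y a) := fun a => differentiable_pd (hKa a)
  have hsymm : ∀ a c e, pd e (pd c fun y => K y a) x = pd c (pd e fun y => K y a) x :=
    fun a c e => pd_pd_comm (hKa a).contDiffAt e c
  have hanti : ∀ a c e, minkSign a * pd e (pd c fun y => K y a) x
      + minkSign c * pd e (pd a fun y => K y c) x = 0 := by
    intro a c e
    have hac := hpd a c
    have hca := hpd c a
    rw [← pd_const_mul e _ (hac x), ← pd_const_mul e _ (hca x),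
      ← pd_add e (by fun_prop) (by fun_prop), funext (hK a c), pd_const]
  have hlowered : minkSign a * pd e (pd c fun y => K y a) x = 0 := by
    have hace := hanti a c e
    have hcea := hanti c e a
    have heac := hanti e a c
    rw [hsymm c e a] at hcea
    rw [hsymm e a c, hsymm a e c] at heac
    linarith
  have hsign : (minkSign a : ℝ) ≠ 0 := left_ne_zero_of_mul_eq_one (minkSign_mul_self a)
  exact (mul_eq_zero.mp hlowered).resolve_left hsign

theorem IsMinkKilling.boxMink_eq_zero (hK : IsMinkKilling K) (hK₂ : ContDiff ℝ 2 K)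
    (a : Fin (d + 1)) (x : Fin (d + 1) → ℝ) : boxMink (fun y => K y a) x = 0 := by
  simp [boxMink_eq_sum, hK.pd_pd_eq_zero hK₂]

theorem sum_sum_mul_eq_zero_of_antisymm_of_symm {ι R : Type*} [Fintype ι] [CommRing R]
    [IsAddTorsionFree R] {S H : ι → ι → R} (hS : ∀ i j, S i j + S j i = 0)
    (hH : ∀ i j, H i j = H j i) :
    ∑ i, ∑ j, S i j * H i j = 0 := by
  refine self_eq_neg.mp ?_
  calc ∑ i, ∑ j, S i j * H i j = ∑ i, ∑ j, S j i * H j i := Finset.sum_comm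
    _ = ∑ i, ∑ j, -(S i j * H i j) := by
      refine Finset.sum_congr rfl fun i _ => Finset.sum_congr rfl fun j _ => ?_
      rw [hH j i, eq_neg_of_add_eq_zero_left (hS j i), neg_mul]
    _ = -∑ i, ∑ j, S i j * H i j := by simp only [Finset.sum_neg_distrib]

theorem boxMink_lieDeriv (hK : IsMinkKilling K) (hK₂ : ContDiff ℝ 2 K) (hφ : ContDiff ℝ 3 φ)
    (x : Fin (d + 1) → ℝ) : boxMink (lieDeriv K φ) x = lieDeriv K (boxMink φ) x := by
  have hKa : ∀ a, ContDiff ℝ 2 fun y => K y a := contDiff_pi.mp hK₂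
  have hpd : ∀ a, ContDiff ℝ 2 (pd a φ) := contDiff_pd hφ (by norm_num)
  have hcross : ∑ a, ∑ c, minkSign c * (pd c (fun y => K y a) x * pd c (pd a φ) x) = 0 := by
    have hskew := sum_sum_mul_eq_zero_of_antisymm_of_symm
      (S := fun a c => minkSign a * pd c (fun y => K y a) x)
      (H := fun a c => minkSign a * (minkSign c * pd c (pd a φ) x))
      (fun a c => hK a c x) (fun a c => by
        rw [pd_pd_comm (hφ.of_le (by norm_num)).contDiffAt, mul_left_comm])
    rw [← hskew]
    refine Finset.sum_congr rfl fun a _ => Finset.sum_congr rfl fun c _ => ?_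
    linear_combination (-(minkSign c * (pd c (fun y => K y a) x * pd c (pd a φ) x)))
      * minkSign_mul_self a
  calc boxMink (lieDeriv K φ) x = ∑ a, boxMink (fun y => K y a * pd a φ y) x :=
        boxMink_sum _ (fun a _ => (hKa a).mul (hpd a)) x
    _ = ∑ a, (2 * ∑ c, minkSign c * (pd c (fun y => K y a) x * pd c (pd a φ) x)
          + K x a * pd a (boxMink φ) x) := by
        refine Finset.sum_congr rfl fun a _ => ?_
        rw [boxMink_mul (hKa a) (hpd a), hK.boxMink_eq_zero hK₂, boxMink_pd hφ, zero_mul, zero_add]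
    _ = lieDeriv K (boxMink φ) x := by
        rw [Finset.sum_add_distrib, ← Finset.mul_sum, hcross, mul_zero, zero_add, lieDeriv]

theorem lieDeriv_comp (K : (Fin (d + 1) → ℝ) → Fin (d + 1) → ℝ) {F : ℝ → ℝ}
    {x : Fin (d + 1) → ℝ} (hF : DifferentiableAt ℝ F (φ x)) (hφ : DifferentiableAt ℝ φ x) :
    lieDeriv K (fun y => F (φ y)) x = deriv F (φ x) * lieDeriv K φ x := by
  simp only [lieDeriv, pd_comp _ hF hφ, Finset.mul_sum]
  exact Finset.sum_congr rfl fun a _ => mul_left_comm _ _ _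

theorem contDiff_lieDeriv {m n : WithTop ℕ∞} (hK : ContDiff ℝ m K) (hφ : ContDiff ℝ n φ)
    (hmn : m + 1 ≤ n) : ContDiff ℝ m (lieDeriv K φ) :=
  ContDiff.sum fun a _ => (contDiff_pi.mp hK a).mul (contDiff_pd hφ hmn a)

end KillingFields

section EnergyEstimate

variable {d : ℕ} {ψ : (Fin (d + 1) → ℝ) → ℝ} {x : Fin (d + 1) → ℝ}

/-- The energy density `½((∂_t ψ)² + |∇_x ψ|² + ψ²)` of the Klein–Gordon field of mass one. The mass
term makes it control `ψ` itself, and not only its derivatives. -/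
noncomputable def energyDensity (ψ : (Fin (d + 1) → ℝ) → ℝ) : (Fin (d + 1) → ℝ) → ℝ :=
  fun x => 1 / 2 * (pd 0 ψ x ^ 2 + ∑ i : Fin d, pd i.succ ψ x ^ 2 + ψ x ^ 2)

/-- The energy current `(-e, ∂_t ψ ∇_x ψ)`, where `e` is the energy density: the contraction of the
stress-energy tensor with `∂_t`. -/
noncomputable def energyCurrent (ψ : (Fin (d + 1) → ℝ) → ℝ) :
    Fin (d + 1) → (Fin (d + 1) → ℝ) → ℝ :=
  Fin.cons (fun x => -energyDensity ψ x) fun i x => pd 0 ψ x * pd i.succ ψ x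

theorem energyDensity_nonneg (ψ : (Fin (d + 1) → ℝ) → ℝ) (x : Fin (d + 1) → ℝ) :
    0 ≤ energyDensity ψ x := by
  unfold energyDensity
  positivity

theorem eq_zero_of_energyDensity_nonpos (h : energyDensity ψ x ≤ 0) : ψ x = 0 := by
  have hgrad : 0 ≤ pd 0 ψ x ^ 2 + ∑ i : Fin d, pd i.succ ψ x ^ 2 := by positivity
  unfold energyDensity at h
  exact pow_eq_zero_iff two_ne_zero |>.mp (le_antisymm (by linarith) (sq_nonneg _))

theorem abs_mul_pd_zero_le_energyDensity (ψ : (Fin (d + 1) → ℝ) → ℝ) (x : Fin (d + 1) → ℝ) :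
    |ψ x| * |pd 0 ψ x| ≤ energyDensity ψ x := by
  have hspace : 0 ≤ ∑ i : Fin d, pd i.succ ψ x ^ 2 := by positivity
  have hamgm := two_mul_le_add_sq |ψ x| |pd 0 ψ x|
  rw [sq_abs, sq_abs] at hamgm
  unfold energyDensity
  linarith

theorem contDiff_energyDensity (hψ : ContDiff ℝ 2 ψ) : ContDiff ℝ 1 (energyDensity ψ) := by
  have hpd : ∀ a, ContDiff ℝ 1 (pd a ψ) := contDiff_pd hψ le_rfl
  have hψ₁ : ContDiff ℝ 1 ψ := hψ.of_le one_le_two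
  unfold energyDensity
  fun_prop

theorem contDiff_energyCurrent (hψ : ContDiff ℝ 2 ψ) (a : Fin (d + 1)) :
    ContDiff ℝ 1 (energyCurrent ψ a) := by
  have hpd : ∀ a, ContDiff ℝ 1 (pd a ψ) := contDiff_pd hψ le_rfl
  cases a using Fin.cases with
  | zero => exact (contDiff_energyDensity hψ).neg
  | succ i => exact (hpd 0).mul (hpd i.succ)

theorem pd_energyDensity (hψ : ContDiff ℝ 2 ψ) (a : Fin (d + 1)) (x : Fin (d + 1) → ℝ) :
    pd a (energyDensity ψ) x = pd 0 ψ x * pd a (pd 0 ψ) x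
      + ∑ i : Fin d, pd i.succ ψ x * pd a (pd i.succ ψ) x + ψ x * pd a ψ x := by
  have hψ₁ : Differentiable ℝ ψ := hψ.differentiable two_ne_zero
  have hpd : ∀ b, Differentiable ℝ (pd b ψ) := differentiable_pd hψ
  unfold energyDensity
  simp (disch := fun_prop) only [pd_const_mul, pd_add, pd_sum, pd_sq, ← Finset.mul_sum]
  ring

theorem sum_pd_energyCurrent (hψ : ContDiff ℝ 2 ψ) (x : Fin (d + 1) → ℝ) :
    ∑ a, pd a (energyCurrent ψ a) x = pd 0 ψ x * (boxMink ψ x - ψ x) := by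
  have hpd : ∀ b, Differentiable ℝ (pd b ψ) := differentiable_pd hψ
  have hspace : ∀ i : Fin d, pd i.succ (energyCurrent ψ i.succ) x =
      pd i.succ ψ x * pd 0 (pd i.succ ψ) x + pd 0 ψ x * pd i.succ (pd i.succ ψ) x := by
    intro i
    change pd i.succ (fun y => pd 0 ψ y * pd i.succ ψ y) x = _
    rw [pd_mul _ (hpd 0 x) (hpd i.succ x), pd_pd_comm hψ.contDiffAt, mul_comm (pd 0 _ x)]
  have htime : pd 0 (energyCurrent ψ 0) x = -pd 0 (energyDensity ψ) x := pd_neg 0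
  rw [Fin.sum_univ_succ, htime, pd_energyDensity hψ, boxMink]
  simp only [hspace, Finset.sum_add_distrib, ← Finset.mul_sum]
  ring

theorem sum_mul_energyCurrent (ω : Fin (d + 1) → ℝ) (ψ : (Fin (d + 1) → ℝ) → ℝ)
    (x : Fin (d + 1) → ℝ) :
    ∑ a, ω a * energyCurrent ψ a x =
      -ω 0 * energyDensity ψ x + pd 0 ψ x * ∑ i : Fin d, ω i.succ * pd i.succ ψ x := by
  rw [Fin.sum_univ_succ, Finset.mul_sum]
  simp only [energyCurrent, Fin.cons_zero, Fin.cons_succ, mul_left_comm (pd 0 ψ x)]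
  ring

theorem abs_mul_sum_mul_le {ι : Type*} [Fintype ι] {c : ℝ} {ω : ι → ℝ} (hc : 0 ≤ c)
    (hω : ∑ i, ω i ^ 2 ≤ c ^ 2) (p : ℝ) (r : ι → ℝ) :
    |p * ∑ i, ω i * r i| ≤ c * (1 / 2 * (p ^ 2 + ∑ i, r i ^ 2)) := by
  have hsqrt : √(∑ i, r i ^ 2) ^ 2 = ∑ i, r i ^ 2 := Real.sq_sqrt (by positivity)
  have hcauchySchwarz : |∑ i, ω i * r i| ≤ c * √(∑ i, r i ^ 2) := by
    refine abs_le_of_sq_le_sq ?_ (mul_nonneg hc (Real.sqrt_nonneg _))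
    calc (∑ i, ω i * r i) ^ 2 ≤ (∑ i, ω i ^ 2) * ∑ i, r i ^ 2 :=
          Finset.sum_mul_sq_le_sq_mul_sq _ _ _
      _ ≤ c ^ 2 * ∑ i, r i ^ 2 := mul_le_mul_of_nonneg_right hω (by positivity)
      _ = (c * √(∑ i, r i ^ 2)) ^ 2 := by rw [mul_pow, hsqrt]
  have hamgm := two_mul_le_add_sq |p| √(∑ i, r i ^ 2)
  rw [sq_abs, hsqrt] at hamgm
  calc |p * ∑ i, ω i * r i| ≤ |p| * (c * √(∑ i, r i ^ 2)) := by
        rw [abs_mul]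
        exact mul_le_mul_of_nonneg_left hcauchySchwarz (abs_nonneg p)
    _ = c * (1 / 2 * (2 * |p| * √(∑ i, r i ^ 2))) := by ring
    _ ≤ c * (1 / 2 * (p ^ 2 + ∑ i, r i ^ 2)) := by gcongr

theorem sum_mul_energyCurrent_nonneg {ω : Fin (d + 1) → ℝ} (hω : ω 0 ≤ 0)
    (hcausal : minkForm ω ω ≤ 0) (ψ : (Fin (d + 1) → ℝ) → ℝ) (x : Fin (d + 1) → ℝ) :
    0 ≤ ∑ a, ω a * energyCurrent ψ a x := by
  have hspace : ∑ i : Fin d, ω i.succ ^ 2 ≤ (-ω 0) ^ 2 := by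
    rw [minkForm_self] at hcausal
    linarith [neg_sq (ω 0)]
  have hflux := neg_le_of_abs_le
    (abs_mul_sum_mul_le (neg_nonneg.mpr hω) hspace (pd 0 ψ x) fun i => pd i.succ ψ x)
  have hmass : 0 ≤ -ω 0 * ψ x ^ 2 := mul_nonneg (neg_nonneg.mpr hω) (sq_nonneg _)
  rw [sum_mul_energyCurrent, energyDensity]
  linarith

theorem energyDensity_eq_zero_of_initial {ψ : (Fin (d + 1) → ℝ) → ℝ} (hψ : Differentiable ℝ ψ)
    (h : ∀ y : Fin (d + 1) → ℝ, y 0 = 0 → ψ y = 0)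
    (h' : ∀ y : Fin (d + 1) → ℝ, y 0 = 0 → pd 0 ψ y = 0) {x : Fin (d + 1) → ℝ} (hx : x 0 = 0) :
    energyDensity ψ x = 0 := by
  have hspace : ∀ i : Fin d, pd i.succ ψ x = 0 := fun i =>
    pd_eq_zero_of_forall_coord_eq_zero i.succ_ne_zero (hψ x) h hx
  simp [energyDensity, h x hx, h' x hx, hspace]

end EnergyEstimate

section ConeWeight

variable {d : ℕ} {l : ℝ} {p x : Fin (d + 1) → ℝ}

/-- The weight `exp(-l t) χ(-η(x - p, x - p))` with `χ` the smooth function `exp(-1/s)` for `s > 0`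
and `0` for `s ≤ 0`. It is supported in the light cone of `p` and, below `p`, decreases in time;
using it as a multiplier replaces integration over the cone by integration over a box. -/
noncomputable def coneWeight (l : ℝ) (p : Fin (d + 1) → ℝ) : (Fin (d + 1) → ℝ) → ℝ :=
  fun x => Real.exp (-l * x 0) * expNegInvGlue (-minkForm (x - p) (x - p))

theorem coneWeight_nonneg (l : ℝ) (p x : Fin (d + 1) → ℝ) : 0 ≤ coneWeight l p x :=
  mul_nonneg (Real.exp_nonneg _) (expNegInvGlue.nonneg _)

theorem coneWeight_pos (h : minkForm (x - p) (x - p) < 0) : 0 < coneWeight l p x :=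
  mul_pos (Real.exp_pos _) (expNegInvGlue.pos_of_pos (neg_pos.mpr h))

theorem coneWeight_eq_zero (h : 0 ≤ minkForm (x - p) (x - p)) : coneWeight l p x = 0 := by
  rw [coneWeight, expNegInvGlue.zero_of_nonpos (neg_nonpos.mpr h), mul_zero]

theorem contDiff_neg_minkForm_sub_self {n : WithTop ℕ∞} (p : Fin (d + 1) → ℝ) :
    ContDiff ℝ n fun x => -minkForm (x - p) (x - p) := by
  simp only [minkForm, Pi.sub_apply]
  fun_prop

theorem contDiff_coneWeight {n : ℕ∞} (l : ℝ) (p : Fin (d + 1) → ℝ) :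
    ContDiff ℝ n (coneWeight l p) :=
  (by fun_prop : ContDiff ℝ n fun x : Fin (d + 1) → ℝ => Real.exp (-l * x 0)).mul
    (expNegInvGlue.contDiff.comp (contDiff_neg_minkForm_sub_self p))

theorem pd_coneWeight (l : ℝ) (p : Fin (d + 1) → ℝ) (a : Fin (d + 1)) (x : Fin (d + 1) → ℝ) :
    pd a (coneWeight l p) x = -l * coneWeight l p x * (Pi.single a 1 : Fin (d + 1) → ℝ) 0
      + Real.exp (-l * x 0) * deriv expNegInvGlue (-minkForm (x - p) (x - p))
        * (-2 * (minkSign a * (x - p) a)) := by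
  have hq : Differentiable ℝ fun y : Fin (d + 1) → ℝ => -minkForm (y - p) (y - p) :=
    (contDiff_neg_minkForm_sub_self (n := 1) p).differentiable one_ne_zero
  have hχ : Differentiable ℝ expNegInvGlue :=
    (expNegInvGlue.contDiff (n := 1)).differentiable one_ne_zero
  have hχq : DifferentiableAt ℝ (fun y => expNegInvGlue (-minkForm (y - p) (y - p))) x :=
    (hχ _).comp x (hq x)
  have hexp : pd a (fun y => Real.exp (-l * y 0)) x =
      Real.exp (-l * x 0) * (-l * (Pi.single a 1 : Fin (d + 1) → ℝ) 0) := by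
    rw [pd_comp a Real.differentiableAt_exp (by fun_prop), Real.deriv_exp,
      pd_const_mul a _ (by fun_prop), pd_coord]
  unfold coneWeight
  rw [pd_mul a (by fun_prop) hχq, hexp, pd_comp a (hχ _) (hq x), pd_neg,
    pd_minkForm_sub_self]
  ring

theorem deriv_expNegInvGlue_of_nonpos {s : ℝ} (hs : s ≤ 0) : deriv expNegInvGlue s = 0 := by
  refine IsLocalMin.deriv_eq_zero (Filter.Eventually.of_forall fun y => ?_)
  rw [expNegInvGlue.zero_of_nonpos hs]
  exact expNegInvGlue.nonneg y

-- Apart from `exp(-l t)`, the weight has a past-directed causal gradient, to which the dominant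
-- energy condition `sum_mul_energyCurrent_nonneg` applies.
theorem mul_energyDensity_le_sum_pd_coneWeight (l : ℝ) (hx : x 0 ≤ p 0)
    (ψ : (Fin (d + 1) → ℝ) → ℝ) :
    l * (coneWeight l p x * energyDensity ψ x) ≤
      ∑ a, pd a (coneWeight l p) x * energyCurrent ψ a x := by
  let ω : Fin (d + 1) → ℝ := fun a => -2 * (minkSign a * (x - p) a)
  have hω₀ : ω 0 ≤ 0 := by simpa [ω] using hx
  have hωω : minkForm ω ω = 4 * minkForm (x - p) (x - p) := by
    simp only [minkForm_eq_sum, Finset.mul_sum, ω]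
    refine Finset.sum_congr rfl fun a _ => ?_
    linear_combination 4 * minkSign a * (x - p) a ^ 2 * minkSign_mul_self a
  set κ : ℝ := Real.exp (-l * x 0) * deriv expNegInvGlue (-minkForm (x - p) (x - p)) with hκ
  have hκ₀ : 0 ≤ κ := mul_nonneg (Real.exp_nonneg _) expNegInvGlue.monotone.deriv_nonneg
  have hsum : ∑ a, pd a (coneWeight l p) x * energyCurrent ψ a x =
      l * (coneWeight l p x * energyDensity ψ x) + κ * ∑ a, ω a * energyCurrent ψ a x := by
    have htime : ∑ a, (Pi.single a 1 : Fin (d + 1) → ℝ) 0 * energyCurrent ψ a x =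
        -energyDensity ψ x := by
      simp [Pi.single_apply, energyCurrent]
    calc ∑ a, pd a (coneWeight l p) x * energyCurrent ψ a x
        = ∑ a, (-l * coneWeight l p x * ((Pi.single a 1 : Fin (d + 1) → ℝ) 0
            * energyCurrent ψ a x) + κ * (ω a * energyCurrent ψ a x)) :=
          Finset.sum_congr rfl fun a _ => by rw [pd_coneWeight]; ring
      _ = l * (coneWeight l p x * energyDensity ψ x)
            + κ * ∑ a, ω a * energyCurrent ψ a x := by
          rw [Finset.sum_add_distrib, ← Finset.mul_sum, ← Finset.mul_sum, htime]
          ring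
  have hnonneg : 0 ≤ κ * ∑ a, ω a * energyCurrent ψ a x := by
    rcases le_total (minkForm (x - p) (x - p)) 0 with hcausal | hspacelike
    · exact mul_nonneg hκ₀ (sum_mul_energyCurrent_nonneg hω₀ (by linarith) ψ x)
    · rw [hκ, deriv_expNegInvGlue_of_nonpos (neg_nonpos.mpr hspacelike), mul_zero, zero_mul]
  linarith

theorem mul_energyDensity_le_sum_pd_coneWeight_mul_energyCurrent {ψ : (Fin (d + 1) → ℝ) → ℝ}
    {C : ℝ} (hC : 0 ≤ C) (hψ : ContDiff ℝ 2 ψ) (hx : x 0 ≤ p 0) (hbox : |boxMink ψ x| ≤ C * |ψ x|) :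
    (l - C - 1) * (coneWeight l p x * energyDensity ψ x) ≤
      ∑ a, pd a (fun y => coneWeight l p y * energyCurrent ψ a y) x := by
  have hw : Differentiable ℝ (coneWeight l p) :=
    (contDiff_coneWeight (n := 1) l p).differentiable one_ne_zero
  have hJ : ∀ a, Differentiable ℝ (energyCurrent ψ a) := fun a =>
    (contDiff_energyCurrent hψ a).differentiable one_ne_zero
  have hsource : -(C + 1) * energyDensity ψ x ≤ pd 0 ψ x * (boxMink ψ x - ψ x) := by
    have hdiff : |boxMink ψ x - ψ x| ≤ (C + 1) * |ψ x| := by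
      linarith [abs_sub (boxMink ψ x) (ψ x)]
    calc -(C + 1) * energyDensity ψ x ≤ -((C + 1) * (|ψ x| * |pd 0 ψ x|)) := by
          rw [neg_mul]
          gcongr
          exact abs_mul_pd_zero_le_energyDensity ψ x
      _ = -(|pd 0 ψ x| * ((C + 1) * |ψ x|)) := by ring
      _ ≤ -|pd 0 ψ x * (boxMink ψ x - ψ x)| := by
          rw [abs_mul]
          gcongr
      _ ≤ pd 0 ψ x * (boxMink ψ x - ψ x) := neg_abs_le _
  calc (l - C - 1) * (coneWeight l p x * energyDensity ψ x)
      = l * (coneWeight l p x * energyDensity ψ x)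
          + coneWeight l p x * (-(C + 1) * energyDensity ψ x) := by ring
    _ ≤ ∑ a, pd a (coneWeight l p) x * energyCurrent ψ a x
          + coneWeight l p x * (pd 0 ψ x * (boxMink ψ x - ψ x)) :=
        add_le_add (mul_energyDensity_le_sum_pd_coneWeight l hx ψ)
          (mul_le_mul_of_nonneg_left hsource (coneWeight_nonneg l p x))
    _ = ∑ a, pd a (fun y => coneWeight l p y * energyCurrent ψ a y) x := by
        rw [← sum_pd_energyCurrent hψ, Finset.mul_sum, ← Finset.sum_add_distrib]
        exact Finset.sum_congr rfl fun a _ => (pd_mul a (hw x) (hJ a x)).symm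

end ConeWeight

section Integration

open MeasureTheory

theorem eqOn_interior_zero_of_setIntegral_eq_zero {X : Type*} [TopologicalSpace X]
    [MeasurableSpace X] {μ : Measure X} [μ.IsOpenPosMeasure] {s : Set X} {f : X → ℝ}
    (hs : MeasurableSet s) (hf : ContinuousOn f s) (hfs : IntegrableOn f s μ)
    (hnonneg : ∀ x ∈ s, 0 ≤ f x) (hzero : ∫ x in s, f x ∂μ = 0) : Set.EqOn f 0 (interior s) := by
  have hae : f =ᵐ[μ.restrict s] 0 :=
    (setIntegral_eq_zero_iff_of_nonneg_ae (ae_restrict_of_forall_mem hs hnonneg) hfs).mp hzero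
  exact Measure.eqOn_open_of_ae_eq (ae_restrict_of_ae_restrict_of_subset interior_subset hae)
    isOpen_interior (hf.mono interior_subset) continuousOn_const

variable {d : ℕ} {A B : Fin (d + 1) → ℝ} {W : Fin (d + 1) → (Fin (d + 1) → ℝ) → ℝ}

theorem continuous_sum_pd (hW : ∀ a, ContDiff ℝ 1 (W a)) :
    Continuous fun x => ∑ a, pd a (W a) x :=
  continuous_finsetSum _ fun a _ => (contDiff_pd (m := 0) (hW a) (zero_add 1).le a).continuous

theorem setIntegral_Icc_sum_pd_eq_zero (hAB : A ≤ B) (hW : ∀ a, ContDiff ℝ 1 (W a))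
    (hface : ∀ a, ∀ x ∈ Set.Icc A B, x a = A a ∨ x a = B a → W a x = 0) :
    ∫ x in Set.Icc A B, ∑ a, pd a (W a) x = 0 := by
  have hfaceIntegral : ∀ a, ∀ c ∈ Set.Icc (A a) (B a), c = A a ∨ c = B a →
      ∫ y in Set.Icc (A ∘ a.succAbove) (B ∘ a.succAbove), W a (a.insertNth c y) = 0 :=
    fun a c hc hcAB => setIntegral_eq_zero_of_forall_eq_zero fun y hy =>
      hface a _ (Fin.insertNth_mem_Icc.mpr ⟨hc, hy⟩) (by simpa using hcAB)
  have hdivergence := integral_divergence_of_hasFDerivAt_off_countable' A B hAB W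
    (fun a => fderiv ℝ (W a)) ∅ Set.countable_empty (fun a => (hW a).continuous.continuousOn)
    (fun x _ a => ((hW a).differentiable one_ne_zero x).hasFDerivAt)
    ((continuous_sum_pd hW).continuousOn.integrableOn_compact isCompact_Icc)
  refine hdivergence.trans (Finset.sum_eq_zero fun a _ => ?_)
  rw [hfaceIntegral a _ ⟨hAB a, le_rfl⟩ (.inr rfl), hfaceIntegral a _ ⟨le_rfl, hAB a⟩ (.inl rfl),
    sub_zero]

end Integration

section Uniqueness

variable {d : ℕ} {ψ V : (Fin (d + 1) → ℝ) → ℝ}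

/-- The lower corner of the smallest box containing the part of the past light cone of `p` in
`{t ≥ 0}`. -/
def coneBoxLower (p : Fin (d + 1) → ℝ) : Fin (d + 1) → ℝ := Fin.cons 0 fun i => p i.succ - p 0

/-- The upper corner of the box with lower corner `coneBoxLower p`. -/
def coneBoxUpper (p : Fin (d + 1) → ℝ) : Fin (d + 1) → ℝ :=
  Fin.cons (p 0) fun i => p i.succ + p 0

theorem coneWeight_mul_energyCurrent_eq_zero_of_mem_face (hψ : Differentiable ℝ ψ)
    (hinit : ∀ x : Fin (d + 1) → ℝ, x 0 = 0 → ψ x = 0)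
    (hinit' : ∀ x : Fin (d + 1) → ℝ, x 0 = 0 → pd 0 ψ x = 0) (l : ℝ) {p x : Fin (d + 1) → ℝ}
    {a : Fin (d + 1)} (hx : x ∈ Set.Icc (coneBoxLower p) (coneBoxUpper p))
    (hxa : x a = coneBoxLower p a ∨ x a = coneBoxUpper p a) :
    coneWeight l p x * energyCurrent ψ a x = 0 := by
  have hx₀ : 0 ≤ x 0 := hx.1 0
  have hxp : x 0 ≤ p 0 := hx.2 0
  cases a using Fin.cases with
  | zero =>
    rcases hxa with hbottom | htop
    · have henergy := energyDensity_eq_zero_of_initial hψ hinit hinit' hbottom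
      simp [energyCurrent, henergy]
    · have htime : (x - p) 0 = 0 := sub_eq_zero.mpr htop
      rw [coneWeight_eq_zero (minkForm_self_nonneg_of_time_eq_zero htime), zero_mul]
  | succ i =>
    have hlateral : |(x - p) i.succ| = p 0 := by
      rw [← abs_of_nonneg (hx₀.trans hxp), abs_eq_abs]
      simp only [coneBoxLower, coneBoxUpper, Fin.cons_succ] at hxa
      rcases hxa with h | h <;> simp [h]
    have hspacelike : |(x - p) 0| ≤ |(x - p) i.succ| := by
      rw [hlateral, Pi.sub_apply, abs_sub_comm, abs_of_nonneg (sub_nonneg.mpr hxp)]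
      linarith
    rw [coneWeight_eq_zero (minkForm_self_nonneg_of_abs_le hspacelike), zero_mul]

theorem mem_interior_coneBox {z : Fin (d + 1) → ℝ} (hz : 0 < z 0) :
    z ∈ interior
      (Set.Icc (coneBoxLower (z + Pi.single 0 1)) (coneBoxUpper (z + Pi.single 0 1))) := by
  rw [← Set.pi_univ_Icc, interior_pi_set Set.finite_univ]
  intro a _
  simp only [interior_Icc]
  cases a using Fin.cases with
  | zero => simpa [coneBoxLower, coneBoxUpper] using hz
  | succ i => constructor <;> simp [coneBoxLower, coneBoxUpper] <;> linarith

theorem eq_zero_of_abs_boxMink_le_of_mem_coneBox (hψ : ContDiff ℝ 2 ψ) {p : Fin (d + 1) → ℝ}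
    {C : ℝ} (hC : 0 ≤ C)
    (hbox : ∀ x ∈ Set.Icc (coneBoxLower p) (coneBoxUpper p), |boxMink ψ x| ≤ C * |ψ x|)
    (hinit : ∀ x : Fin (d + 1) → ℝ, x 0 = 0 → ψ x = 0)
    (hinit' : ∀ x : Fin (d + 1) → ℝ, x 0 = 0 → pd 0 ψ x = 0) {z : Fin (d + 1) → ℝ}
    (hz : z ∈ interior (Set.Icc (coneBoxLower p) (coneBoxUpper p)))
    (hzp : minkForm (z - p) (z - p) < 0) : ψ z = 0 := by
  have hzbox := interior_subset hz
  -- The exponent `C + 2` absorbs the `C + 1` lost to the source and leaves the full energy density.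
  set W : Fin (d + 1) → (Fin (d + 1) → ℝ) → ℝ :=
    fun a x => coneWeight (C + 2) p x * energyCurrent ψ a x
  have hW : ∀ a, ContDiff ℝ 1 (W a) := fun a =>
    (contDiff_coneWeight (n := 1) (C + 2) p).mul (contDiff_energyCurrent hψ a)
  have henergy : ∀ x ∈ Set.Icc (coneBoxLower p) (coneBoxUpper p),
      coneWeight (C + 2) p x * energyDensity ψ x ≤ ∑ a, pd a (W a) x := by
    intro x hx
    have hle := mul_energyDensity_le_sum_pd_coneWeight_mul_energyCurrent (l := C + 2) (p := p) hC
      hψ (hx.2 0) (hbox x hx)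
    rwa [show C + 2 - C - 1 = 1 by ring, one_mul] at hle
  have hintegral : ∫ x in Set.Icc (coneBoxLower p) (coneBoxUpper p), ∑ a, pd a (W a) x = 0 :=
    setIntegral_Icc_sum_pd_eq_zero (hzbox.1.trans hzbox.2) hW fun _ _ hx hxa =>
      coneWeight_mul_energyCurrent_eq_zero_of_mem_face (hψ.differentiable two_ne_zero) hinit
        hinit' _ hx hxa
  have hdiv : ∑ a, pd a (W a) z = 0 :=
    eqOn_interior_zero_of_setIntegral_eq_zero measurableSet_Icc (continuous_sum_pd hW).continuousOn
      ((continuous_sum_pd hW).continuousOn.integrableOn_compact isCompact_Icc)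
      (fun x hx => (mul_nonneg (coneWeight_nonneg _ _ _) (energyDensity_nonneg ψ x)).trans
        (henergy x hx)) hintegral hz
  have hzenergy := henergy z hzbox
  rw [hdiv] at hzenergy
  exact eq_zero_of_energyDensity_nonpos (nonpos_of_mul_nonpos_right hzenergy (coneWeight_pos hzp))

theorem eq_zero_of_abs_boxMink_le_of_time_nonneg (hψ : ContDiff ℝ 2 ψ) (hV : Continuous V)
    (hbox : ∀ x, |boxMink ψ x| ≤ V x * |ψ x|)
    (hinit : ∀ x : Fin (d + 1) → ℝ, x 0 = 0 → ψ x = 0)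
    (hinit' : ∀ x : Fin (d + 1) → ℝ, x 0 = 0 → pd 0 ψ x = 0)
    {z : Fin (d + 1) → ℝ} (hz : 0 ≤ z 0) : ψ z = 0 := by
  rcases hz.eq_or_lt with hz₀ | hz₀
  · exact hinit z hz₀.symm
  have hzbox := mem_interior_coneBox hz₀
  obtain ⟨C, hC⟩ := isCompact_Icc.exists_bound_of_continuousOn (f := V) hV.continuousOn
  have hC₀ : 0 ≤ C := (norm_nonneg _).trans (hC z (interior_subset hzbox))
  refine eq_zero_of_abs_boxMink_le_of_mem_coneBox hψ hC₀ (fun x hx => ?_) hinit hinit' hzbox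
    (by simp [minkForm])
  exact (hbox x).trans
    (mul_le_mul_of_nonneg_right ((Real.le_norm_self _).trans (hC x hx)) (abs_nonneg _))

theorem eq_zero_of_abs_boxMink_le (hψ : ContDiff ℝ 2 ψ) (hV : Continuous V)
    (hbox : ∀ x, |boxMink ψ x| ≤ V x * |ψ x|)
    (hinit : ∀ x : Fin (d + 1) → ℝ, x 0 = 0 → ψ x = 0)
    (hinit' : ∀ x : Fin (d + 1) → ℝ, x 0 = 0 → pd 0 ψ x = 0) (z : Fin (d + 1) → ℝ) :
    ψ z = 0 := by
  rcases le_total 0 (z 0) with hz | hz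
  · exact eq_zero_of_abs_boxMink_le_of_time_nonneg hψ hV hbox hinit hinit' hz
  have hreflect : ∀ y : Fin (d + 1) → ℝ, minkSign * (minkSign * y) = y := fun y =>
    funext fun a => by simp [← mul_assoc]
  have hreflected : (fun y => ψ (minkSign * y)) (minkSign * z) = 0 := by
    refine eq_zero_of_abs_boxMink_le_of_time_nonneg (V := fun y => V (minkSign * y))
      (by fun_prop) (by fun_prop) (fun x => ?_) (fun x hx => hinit _ (by simp [hx]))
      (fun x hx => ?_) (by simpa using hz)
    · rw [boxMink_comp_minkSign_mul hψ]
      exact hbox _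
    · rw [pd_comp_mul_left 0 minkSign (hψ.differentiable two_ne_zero _),
        hinit' _ (by simp [hx]), mul_zero]
  simpa only [hreflect] using hreflected

end Uniqueness

theorem initial_symmetry_preserved_general {d : ℕ} {K : (Fin (d + 1) → ℝ) → Fin (d + 1) → ℝ}
    (hK : IsMinkKilling K) (hK₂ : ContDiff ℝ 2 K) {F : ℝ → ℝ} (hF : ContDiff ℝ 1 F)
    {φ : (Fin (d + 1) → ℝ) → ℝ} (hφ : ContDiff ℝ 3 φ) (hwave : ∀ x, boxMink φ x = F (φ x))
    (hinit : ∀ x : Fin (d + 1) → ℝ, x 0 = 0 → lieDeriv K φ x = 0)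
    (hinit' : ∀ x : Fin (d + 1) → ℝ, x 0 = 0 → pd 0 (lieDeriv K φ) x = 0)
    (x : Fin (d + 1) → ℝ) : lieDeriv K φ x = 0 := by
  have hψ : ContDiff ℝ 2 (lieDeriv K φ) := contDiff_lieDeriv hK₂ hφ (by norm_num)
  have hlinearized : ∀ y, boxMink (lieDeriv K φ) y = deriv F (φ y) * lieDeriv K φ y := by
    intro y
    rw [boxMink_lieDeriv hK hK₂ hφ, funext hwave]
    exact lieDeriv_comp K (hF.differentiable one_ne_zero _) (hφ.differentiable three_ne_zero y)
  have hV : Continuous fun y => |deriv F (φ y)| :=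
    ((hF.continuous_deriv le_rfl).comp hφ.continuous).abs
  exact eq_zero_of_abs_boxMink_le hψ hV (fun y => by rw [hlinearized, abs_mul]) hinit hinit' x

/-- Symmetries of initial data are preserved by hyperbolic evolution: if `□_η φ = F(φ)`
on Minkowski space, `K = A x + b` is an affine η-Killing field, and the Lie derivative
`ψ = Kφ` together with `∂_t ψ` vanishes on the initial hypersurface `{t = 0}`, then
`ψ ≡ 0`, i.e. `φ` is invariant along `K`. -/
theorem initial_symmetry_preserved {d : ℕ} (hd : 1 ≤ d)
    (A : (Fin (d + 1) → ℝ) →ₗ[ℝ] (Fin (d + 1) → ℝ)) (b : Fin (d + 1) → ℝ)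
    (hA : ∀ v w : Fin (d + 1) → ℝ, minkForm (A v) w + minkForm v (A w) = 0)
    (K : (Fin (d + 1) → ℝ) → (Fin (d + 1) → ℝ)) (hKdef : ∀ x, K x = A x + b)
    (F : ℝ → ℝ) (hF : ContDiff ℝ (⊤ : ℕ∞) F)
    (φ : (Fin (d + 1) → ℝ) → ℝ) (hφ : ContDiff ℝ (⊤ : ℕ∞) φ)
    (hwave : ∀ x, boxMink φ x = F (φ x))
    (ψ : (Fin (d + 1) → ℝ) → ℝ) (hψdef : ∀ x, ψ x = ∑ a, K x a * pd a φ x)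
    (hinit : ∀ x : Fin (d + 1) → ℝ, x 0 = 0 → ψ x = 0)
    (hinit' : ∀ x : Fin (d + 1) → ℝ, x 0 = 0 → pd 0 ψ x = 0) :
    ∀ x, ψ x = 0 := by
  obtain rfl : K = fun x => A x + b := funext hKdef
  obtain rfl : ψ = lieDeriv (fun x => A x + b) φ := funext hψdef
  exact initial_symmetry_preserved_general (isMinkKilling_affine hA b) (contDiff_affine A b)
    (contDiff_infty.mp hF 1) (contDiff_infty.mp hφ 3) hwave hinit hinit'
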